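/- arXiv:2001.04525 — 4 statements merged into one kernel-verified Lean document; each statement's English description precedes it below -/
import Mathlib

section
/- Let k ≥ 1 and let b₁, b₂, b₃ : Fin k → Bool be three pairwise distinct Boolean strings (the robots' IDs), and let s₁, s₂, s₃ : Bool be arbitrary (the robots' chiralities). Then there exists an index i : Fin k such that the three Boolean values xor s₁ (b₁ i), xor s₂ (b₂ i), xor s₃ (b₃ i) are not all equal. (In the exploration algorithm this says: among the first k phases of Stage 1 there is a phase in which one robot moves in the direction opposite to the direction followed by the other two robots.) -/
/-!
A robot of chirality `c` whose current ID symbol is `x` moves in direction `f c x`, where `f c` is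
injective (here `f = xor`). There are more robots than chiralities, so two of them share a
chirality; these two move in the same direction exactly when their current ID symbols agree. As
their IDs differ, in some phase they move in different directions, whatever the others do.
-/

open Function

theorem injective_triple_iff_ne {α : Type*} {x y z : α} :
    Injective ![x, y, z] ↔ x ≠ y ∧ x ≠ z ∧ y ≠ z := by
  rw [Matrix.vecCons, Fin.cons_injective_iff, injective_pair_iff_ne]
  simp [and_assoc, and_left_comm]

section

variable {R σ ι β γ : Type*} {f : σ → β → γ} {b : R → ι → β}

theorem exists_apply_ne_of_not_injective (hf : ∀ c, Injective (f c)) (hb : Injective b)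
    {s : R → σ} (hs : ¬ Injective s) : ∃ i j j', f (s j) (b j i) ≠ f (s j') (b j' i) := by
  obtain ⟨j, j', hsj, hj⟩ := not_injective_iff.mp hs
  obtain ⟨i, hi⟩ := ne_iff.mp (hb.ne hj)
  refine ⟨i, j, j', ?_⟩
  rw [hsj]
  exact (hf (s j')).ne hi

theorem stage1_phase_exists_opposite_general (hf : ∀ c, Injective (f c)) (hb : Injective b)
    (hcard : ENat.card σ < ENat.card R) (s : R → σ) :
    ∃ i j j', f (s j) (b j i) ≠ f (s j') (b j' i) :=
  exists_apply_ne_of_not_injective hf hb fun hs ↦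
    hcard.not_ge (ENat.card_le_card_of_injective hs)

end

/-- Lemma 3 (lem:phase): given three pairwise distinct ID bit-strings `b₁ b₂ b₃` of length
`k ≥ 1` and arbitrary chiralities `s₁ s₂ s₃`, there is an index `i` at which the three
direction bits `xor sⱼ (bⱼ i)` are not all equal, i.e. some robot moves opposite to the
other two. -/
theorem stage1_phase_exists_opposite (k : ℕ) (hk : 1 ≤ k)
    (b₁ b₂ b₃ : Fin k → Bool)
    (h12 : b₁ ≠ b₂) (h13 : b₁ ≠ b₃) (h23 : b₂ ≠ b₃)
    (s₁ s₂ s₃ : Bool) :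
    ∃ i : Fin k,
      ¬ (xor s₁ (b₁ i) = xor s₂ (b₂ i) ∧ xor s₂ (b₂ i) = xor s₃ (b₃ i)) := by
  obtain ⟨i, j, j', hne⟩ := stage1_phase_exists_opposite_general (f := xor)
    (fun _ _ _ ↦ Bool.xor_right_inj.mp) (injective_triple_iff_ne.mpr ⟨h12, h13, h23⟩)
    (by norm_num) ![s₁, s₂, s₃]
  refine ⟨i, fun h ↦ hne ?_⟩
  fin_cases j <;> fin_cases j' <;> simp [h]
end

section
/- Let n ≥ 3. Consider three robots on the dynamic ring ZMod n with arbitrary start nodes and fixed attempted directions d₁, d₂, d₃ : Bool (true = clockwise, false = counterclockwise) that are not all equal, where each robot attempts to move in its fixed direction in every round. Then for every adversary e : ℕ → Option (ZMod n), some two of the three robots meet within n − 2 rounds: there exist distinct indices a ≠ b among {1,2,3} such that either p_a t = p_b t for some t ≤ n − 2, or there is a round t with t + 1 ≤ n − 2 in which p_a (t+1) = p_b t, p_b (t+1) = p_a t and p_a t ≠ p_b t (the robots cross the same edge in opposite directions). -/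
/-- One round of movement on the dynamic ring `ZMod n`: a robot at node `p` attempting to
move clockwise (`dir = true`) moves to `p + 1` unless the adversary removed edge `p`;
attempting counterclockwise (`dir = false`) it moves to `p - 1` unless edge `p - 1` was
removed. -/
def ringStep (n : ℕ) (e : Option (ZMod n)) (dir : Bool) (p : ZMod n) : ZMod n :=
  if dir then (if e ≠ some p then p + 1 else p)
  else (if e ≠ some (p - 1) then p - 1 else p)

/-- Position of a robot with start node `v`, per-round attempted directions `d` and
adversary `e`. -/
def ringPos (n : ℕ) (e : ℕ → Option (ZMod n)) (d : ℕ → Bool) (v : ZMod n) : ℕ → ZMod n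
  | 0 => v
  | t + 1 => ringStep n (e t) (d t) (ringPos n e d v t)

/-- Two robots with position functions `p q` meet within `R` rounds: same node at some
time `t ≤ R`, or they cross the same edge in opposite directions in a round completed by
time `R`. -/
def meetsWithin (n R : ℕ) (p q : ℕ → ZMod n) : Prop :=
  (∃ t ≤ R, p t = q t) ∨
  (∃ t, t + 1 ≤ R ∧ p (t + 1) = q t ∧ q (t + 1) = p t ∧ p t ≠ q t)

/-!
Suppose robots `A` and `B` attempt to move clockwise and `C` counterclockwise, and measure
clockwise distances to `C`, with `A` nearer than `B`. As long as no two robots meet, `C` neither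
reaches nor jumps over `A`, and `B` cannot overtake `A`, so `A` stays strictly between `B` and `C`.
Hence `B` and `C` are never adjacent on that arc and a single missing edge cannot stop both of
them: their distance, initially at most `n - 1`, drops in every round, yet it stays at least `2`.
This is impossible for `n - 2` rounds. The other distribution of directions follows by reflecting
the ring.
-/

section Distance

variable {n : ℕ}

/-- The number of edges on the clockwise arc from `p` to `q`. It is used for `n ≠ 0`; on
`ZMod 0 = ℤ` it is the absolute value of `q - p`. -/
def cwDist (p q : ZMod n) : ℕ := (q - p).val

lemma cwDist_eq_zero {p q : ZMod n} : cwDist p q = 0 ↔ p = q := by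
  rw [cwDist, ZMod.val_eq_zero, sub_eq_zero, eq_comm]

lemma cwDist_add_one_le_one (p : ZMod n) : cwDist p (p + 1) ≤ 1 := by
  rw [cwDist, add_sub_cancel_left, ZMod.val_one_eq_one_mod]
  exact Nat.mod_le 1 n

variable [NeZero n]

lemma cwDist_lt (p q : ZMod n) : cwDist p q < n := ZMod.val_lt _

lemma add_cwDist (p q : ZMod n) : p + cwDist p q = q := by
  rw [cwDist, ZMod.natCast_zmod_val, add_sub_cancel]

lemma cwDist_left_injective (q : ZMod n) : Function.Injective (cwDist · q) :=
  (ZMod.val_injective n).comp sub_right_injective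

lemma cwDist_add_sub {p q : ZMod n} {a b : ℕ} (h : a + b ≤ cwDist p q) :
    cwDist (p + (a : ZMod n)) (q - (b : ZMod n)) + (a + b) = cwDist p q := by
  have hval : ((a + b : ℕ) : ZMod n).val = a + b :=
    ZMod.val_natCast_of_lt (h.trans_lt (cwDist_lt p q))
  have harc : q - b - (p + a) = (q - p) - (a + b : ℕ) := by push_cast; ring
  rw [cwDist, harc, ZMod.val_sub (hval.le.trans h), hval]
  exact Nat.sub_add_cancel h

end Distance

section Step

variable {n : ℕ} {e : Option (ZMod n)} {p q r : ZMod n}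

/-- The number of edges, `0` or `1`, that a robot at `p` attempting direction `d` traverses in a
round in which the adversary removes `e`. -/
def progress (e : Option (ZMod n)) (d : Bool) (p : ZMod n) : ℕ :=
  if e = some (if d then p else p - 1) then 0 else 1

lemma progress_le_one (e : Option (ZMod n)) (d : Bool) (p : ZMod n) : progress e d p ≤ 1 := by
  rw [progress]
  split_ifs <;> simp

lemma ringStep_true (e : Option (ZMod n)) (p : ZMod n) :
    ringStep n e true p = p + progress e true p := by
  by_cases h : e = some p <;> simp [ringStep, progress, h]

lemma ringStep_false (e : Option (ZMod n)) (p : ZMod n) :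
    ringStep n e false p = p - progress e false p := by
  by_cases h : e = some (p - 1) <;> simp [ringStep, progress, h]

lemma progress_add_progress_pos (h : q ≠ p + 1) :
    0 < progress e true p + progress e false q := by
  by_contra! hstuck
  have hp : e = some p := by simpa [progress] using (by omega : progress e true p = 0)
  have hq : e = some (q - 1) := by simpa [progress] using (by omega : progress e false q = 0)
  have hpq : p = q - 1 := Option.some_injective _ (hp.symm.trans hq)
  exact h (sub_eq_iff_eq_add.mp hpq.symm)

variable [NeZero n]

lemma cwDist_ringStep_add_progress (hne : p ≠ q)
    (hcross : ¬ (ringStep n e true p = q ∧ ringStep n e false q = p)) :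
    cwDist (ringStep n e true p) (ringStep n e false q) +
      (progress e true p + progress e false q) = cwDist p q := by
  rw [ringStep_true, ringStep_false] at *
  refine cwDist_add_sub (not_lt.mp fun hlt => hcross ?_)
  have hpos : cwDist p q ≠ 0 := cwDist_eq_zero.not.mpr hne
  have hp := progress_le_one e true p
  have hq := progress_le_one e false q
  have hadj : p + 1 = q := by
    simpa [show cwDist p q = 1 by omega] using add_cwDist p q
  rw [show progress e true p = 1 by omega, show progress e false q = 1 by omega]
  simp [← hadj]

lemma cwDist_ringStep_lt (hdist : 1 < cwDist p q)
    (hcross : ¬ (ringStep n e true p = q ∧ ringStep n e false q = p)) :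
    cwDist (ringStep n e true p) (ringStep n e false q) < cwDist p q := by
  have hne : p ≠ q := fun h => by simp [cwDist_eq_zero.mpr h] at hdist
  have hnadj : q ≠ p + 1 := fun h => (cwDist_add_one_le_one p).not_gt (h ▸ hdist)
  have hstep := cwDist_ringStep_add_progress (e := e) hne hcross
  have hprogress := progress_add_progress_pos (e := e) hnadj
  omega

lemma cwDist_ringStep_lt_cwDist_ringStep (hlt : cwDist p r < cwDist q r)
    (hpr : p ≠ r) (hpq' : ringStep n e true p ≠ ringStep n e true q)
    (hcrossp : ¬ (ringStep n e true p = r ∧ ringStep n e false r = p))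
    (hcrossq : ¬ (ringStep n e true q = r ∧ ringStep n e false r = q)) :
    cwDist (ringStep n e true p) (ringStep n e false r) <
      cwDist (ringStep n e true q) (ringStep n e false r) := by
  have hqr : q ≠ r := fun h => by simp [cwDist_eq_zero.mpr h] at hlt
  have hp := cwDist_ringStep_add_progress (e := e) hpr hcrossp
  have hq := cwDist_ringStep_add_progress (e := e) hqr hcrossq
  have hne := (cwDist_left_injective (ringStep n e false r)).ne hpq'
  have hprogress := progress_le_one e true q
  omega

end Step

section Meeting

variable {n R t : ℕ} {p q r : ℕ → ZMod n}

lemma meetsWithin.symm (h : meetsWithin n R p q) : meetsWithin n R q p :=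
  h.imp (fun ⟨t, ht, heq⟩ => ⟨t, ht, heq.symm⟩)
    fun ⟨t, ht, hpq, hqp, hne⟩ => ⟨t, ht, hqp, hpq, hne.symm⟩

lemma meetsWithin_of_eq (ht : t ≤ R) (h : p t = q t) : meetsWithin n R p q :=
  .inl ⟨t, ht, h⟩

lemma meetsWithin_of_cross (ht : t + 1 ≤ R) (h : p (t + 1) = q t ∧ q (t + 1) = p t) :
    meetsWithin n R p q := by
  by_cases heq : p t = q t
  · exact meetsWithin_of_eq (Nat.le_of_succ_le ht) heq
  · exact .inr ⟨t, ht, h.1, h.2, heq⟩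

lemma meetsWithin_neg : meetsWithin n R (-p) (-q) ↔ meetsWithin n R p q := by
  simp only [meetsWithin, Pi.neg_apply, neg_inj, ne_eq]

/-- Some two of the three trajectories `p`, `q`, `r` meet within `R` rounds. -/
def SomePairMeets (R : ℕ) (p q r : ℕ → ZMod n) : Prop :=
  meetsWithin n R p q ∨ meetsWithin n R p r ∨ meetsWithin n R q r

namespace SomePairMeets

lemma swap_left : SomePairMeets R p q r → SomePairMeets R q p r
  | .inl hpq => .inl hpq.symm
  | .inr (.inl hpr) => .inr (.inr hpr)
  | .inr (.inr hqr) => .inr (.inl hqr)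

lemma swap_right : SomePairMeets R p q r → SomePairMeets R p r q
  | .inl hpq => .inr (.inl hpq)
  | .inr (.inl hpr) => .inl hpr
  | .inr (.inr hqr) => .inr (.inr hqr.symm)

lemma of_neg (h : SomePairMeets R (-p) (-q) (-r)) : SomePairMeets R p q r := by
  simpa only [SomePairMeets, meetsWithin_neg] using h

end SomePairMeets

end Meeting

section Reflection

variable {n : ℕ}

/-- The image of a removed edge under the reflection `p ↦ -p` of the ring: edge `i`, joining `i`
and `i + 1`, becomes the edge joining `-1 - i` and `-i`, whose index is `-1 - i`. -/
def reflectEdge (e : Option (ZMod n)) : Option (ZMod n) := e.map (-1 - ·)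

lemma reflectEdge_eq_some {e : Option (ZMod n)} {i : ZMod n} :
    reflectEdge e = some (-1 - i) ↔ e = some i :=
  (Option.map_injective sub_right_injective).eq_iff (b := some i)

lemma ringStep_reflectEdge (e : Option (ZMod n)) (d : Bool) (p : ZMod n) :
    ringStep n (reflectEdge e) (!d) (-p) = -ringStep n e d p := by
  have hcw : reflectEdge e = some (-p - 1) ↔ e = some p := by
    rw [← reflectEdge_eq_some (i := p), neg_sub_comm]
  have hccw : reflectEdge e = some (-p) ↔ e = some (p - 1) := by
    rw [← reflectEdge_eq_some (i := p - 1)]; ring_nf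
  cases d <;> simp only [ringStep, Bool.not_true, Bool.not_false, if_true, if_false, ne_eq,
    hcw, hccw, Bool.false_eq_true] <;> split_ifs <;> ring

lemma ringPos_reflectEdge (e : ℕ → Option (ZMod n)) (d : ℕ → Bool) (v : ZMod n) :
    ringPos n (fun t => reflectEdge (e t)) (fun t => !d t) (-v) = -ringPos n e d v := by
  funext t
  induction t with
  | zero => rfl
  | succ t ih => simp only [ringPos, ih, Pi.neg_apply, ringStep_reflectEdge]

end Reflection

section ThreeRobots

variable {n : ℕ} [NeZero n]

lemma cwDist_lt_and_add_le_of_not_somePairMeets {R : ℕ} {e : ℕ → Option (ZMod n)} {u v w : ZMod n}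
    (hunmet : ¬ SomePairMeets R (ringPos n e (fun _ => true) u) (ringPos n e (fun _ => true) v)
      (ringPos n e (fun _ => false) w))
    (huv : cwDist u w < cwDist v w) {t : ℕ} (ht : t ≤ R) :
    cwDist (ringPos n e (fun _ => true) u t) (ringPos n e (fun _ => false) w t) <
        cwDist (ringPos n e (fun _ => true) v t) (ringPos n e (fun _ => false) w t) ∧
      cwDist (ringPos n e (fun _ => true) v t) (ringPos n e (fun _ => false) w t) + t ≤
        cwDist v w := by
  simp only [SomePairMeets, not_or] at hunmet
  obtain ⟨huv_unmet, huw_unmet, hvw_unmet⟩ := hunmet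
  induction t with
  | zero => exact ⟨huv, le_rfl⟩
  | succ t ih =>
    have ht' : t ≤ R := Nat.le_of_succ_le ht
    obtain ⟨hlt, hle⟩ := ih ht'
    have huw_ne := mt (meetsWithin_of_eq ht') huw_unmet
    have huv_ne := mt (meetsWithin_of_eq ht) huv_unmet
    have huw_cross := mt (meetsWithin_of_cross ht) huw_unmet
    have hvw_cross := mt (meetsWithin_of_cross ht) hvw_unmet
    have hlt' := cwDist_ringStep_lt_cwDist_ringStep hlt huw_ne huv_ne huw_cross hvw_cross
    have hpos := Nat.pos_of_ne_zero (cwDist_eq_zero.not.mpr huw_ne)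
    have hshrink := cwDist_ringStep_lt (by omega) hvw_cross
    refine ⟨hlt', ?_⟩
    simp only [ringPos] at hshrink ⊢
    omega

lemma somePairMeets_of_cwDist_lt {R : ℕ} {u v w : ZMod n} (huv : cwDist u w < cwDist v w)
    (hR : cwDist v w ≤ R + 1) (e : ℕ → Option (ZMod n)) :
    SomePairMeets R (ringPos n e (fun _ => true) u) (ringPos n e (fun _ => true) v)
      (ringPos n e (fun _ => false) w) := by
  by_contra hunmet
  obtain ⟨hlt, hle⟩ := cwDist_lt_and_add_le_of_not_somePairMeets hunmet huv le_rfl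
  have hmeet := cwDist_eq_zero.mp
    (by omega : cwDist (ringPos n e (fun _ => true) u R) (ringPos n e (fun _ => false) w R) = 0)
  exact hunmet (.inr (.inl (meetsWithin_of_eq le_rfl hmeet)))

lemma somePairMeets_cw_cw_ccw (e : ℕ → Option (ZMod n)) (u v w : ZMod n) :
    SomePairMeets (n - 2) (ringPos n e (fun _ => true) u) (ringPos n e (fun _ => true) v)
      (ringPos n e (fun _ => false) w) := by
  have hfar (x : ZMod n) : cwDist x w ≤ n - 2 + 1 := by
    have := cwDist_lt x w
    omega
  rcases lt_trichotomy (cwDist u w) (cwDist v w) with hlt | heq | hgt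
  · exact somePairMeets_of_cwDist_lt hlt (hfar v) e
  · exact .inl (meetsWithin_of_eq (Nat.zero_le _) (cwDist_left_injective w heq))
  · exact (somePairMeets_of_cwDist_lt hgt (hfar u) e).swap_left

lemma somePairMeets_of_opposite (e : ℕ → Option (ZMod n)) (d : Bool) (u v w : ZMod n) :
    SomePairMeets (n - 2) (ringPos n e (fun _ => d) u) (ringPos n e (fun _ => d) v)
      (ringPos n e (fun _ => !d) w) := by
  cases d with
  | true => exact somePairMeets_cw_cw_ccw e u v w
  | false =>
    apply SomePairMeets.of_neg
    simp only [← ringPos_reflectEdge]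
    exact somePairMeets_cw_cw_ccw _ (-u) (-v) (-w)

end ThreeRobots

/-- Lemma 2 (lem:meeting): if three robots on a dynamic ring of size `n ≥ 3` each attempt
to move in a fixed direction in every round, and their directions are not all equal, then
for every adversary some two of them meet within `n - 2` rounds. -/
theorem two_of_three_meet (n : ℕ) (hn : 3 ≤ n)
    (v₁ v₂ v₃ : ZMod n) (d₁ d₂ d₃ : Bool)
    (hd : ¬ (d₁ = d₂ ∧ d₂ = d₃))
    (e : ℕ → Option (ZMod n)) :
    meetsWithin n (n - 2)
        (ringPos n e (fun _ => d₁) v₁) (ringPos n e (fun _ => d₂) v₂) ∨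
    meetsWithin n (n - 2)
        (ringPos n e (fun _ => d₁) v₁) (ringPos n e (fun _ => d₃) v₃) ∨
    meetsWithin n (n - 2)
        (ringPos n e (fun _ => d₂) v₂) (ringPos n e (fun _ => d₃) v₃) := by
  have : NeZero n := ⟨by omega⟩
  change SomePairMeets (n - 2) _ _ _
  by_cases h₁₂ : d₁ = d₂
  · obtain rfl : d₃ = !d₁ := Bool.eq_not.mpr fun h => hd ⟨h₁₂, h₁₂ ▸ h.symm⟩
    exact h₁₂ ▸ somePairMeets_of_opposite e d₁ v₁ v₂ v₃
  obtain rfl : d₂ = !d₁ := Bool.eq_not.mpr (Ne.symm h₁₂)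
  rcases Bool.eq_or_eq_not d₃ d₁ with rfl | rfl
  · exact (somePairMeets_of_opposite e d₃ v₁ v₃ v₂).swap_right
  · have h := somePairMeets_of_opposite e (!d₁) v₂ v₃ v₁
    rw [Bool.not_not] at h
    exact h.swap_right.swap_left
end

section
/- Let n ≥ 3. On the dynamic ring ZMod n, robots A and B start at the same node v₀, with A attempting to move clockwise in every round and B attempting to move counterclockwise in every round; let a t and b t be their successful-move counters, so p_A t = v₀ + a t and p_B t = v₀ − b t. Fix any adversary e : ℕ → Option (ZMod n) and suppose t ≥ 1 is a round with a (t−1) + b (t−1) < n ≤ a t + b t (the first time the combined counter reaches n). Then exactly one of the following holds: (i) a t + b t = n and p_A t = p_B t (the robots meet at a node and the sum of their counters equals exactly n), or (ii) a t + b t = n + 1, p_A t = p_B (t−1) and p_B t = p_A (t−1) (the robots crossed the same edge in opposite directions in round t−1, and the sum of their counters equals exactly n + 1). -/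
/-- Successful-move counter: number of rounds `t' < t` in which the robot's position
changed. -/
def successCount (n : ℕ) (p : ℕ → ZMod n) (t : ℕ) : ℕ :=
  ((Finset.range t).filter (fun t' => p (t' + 1) ≠ p t')).card

/-!
A robot that always attempts the same direction moves by the same step `±1` whenever it moves, so
`p_A r = v₀ + a r` and `p_B s = v₀ - b s` at any rounds `r`, `s`. Hence `p_A r = p_B s` exactly when
`n ∣ a r + b s`. Each counter grows by at most one per round, so `a + b` can miss the value `n` only
by jumping from `n - 1` to `n + 1` in a round in which both robots move; then
`a t + b (t - 1) = n = a (t - 1) + b t`, which says that the robots exchange their nodes.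
-/

section SuccessCount

variable {n : ℕ} (p : ℕ → ZMod n) (t : ℕ)

theorem successCount_succ :
    successCount n p (t + 1) = successCount n p t + if p (t + 1) ≠ p t then 1 else 0 := by
  simp only [successCount, Finset.card_filter, Finset.sum_range_succ]

theorem successCount_succ_le : successCount n p (t + 1) ≤ successCount n p t + 1 := by
  rw [successCount_succ]
  split_ifs <;> omega

theorem eq_add_successCount_nsmul {p : ℕ → ZMod n} {c : ZMod n}
    (hstep : ∀ s, p (s + 1) = p s ∨ p (s + 1) = p s + c) :
    p t = p 0 + successCount n p t • c := by
  induction t with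
  | zero => simp [successCount]
  | succ t ih =>
    rw [successCount_succ]
    by_cases hstay : p (t + 1) = p t
    · rw [if_neg (not_not.mpr hstay), add_zero, hstay, ih]
    · have hmove : p (t + 1) = p t + c := (hstep t).resolve_left hstay
      rw [if_pos hstay, succ_nsmul, ← add_assoc, ← ih, hmove]

end SuccessCount

section RingPos

variable {n : ℕ}

theorem ringStep_eq_self_or_eq_add (e : Option (ZMod n)) (dir : Bool) (p : ZMod n) :
    ringStep n e dir p = p ∨ ringStep n e dir p = p + if dir then 1 else -1 := by
  cases dir <;> simp only [ringStep] <;> split_ifs <;> simp_all [sub_eq_add_neg]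

variable (e : ℕ → Option (ZMod n)) (v : ZMod n)

theorem ringPos_const_eq_add_nsmul (dir : Bool) (t : ℕ) :
    ringPos n e (fun _ => dir) v t =
      v + successCount n (ringPos n e (fun _ => dir) v) t • if dir then 1 else -1 :=
  eq_add_successCount_nsmul t fun s => ringStep_eq_self_or_eq_add (e s) dir _

theorem ringPos_true_eq_ringPos_false_iff_dvd (r s : ℕ) :
    ringPos n e (fun _ => true) v r = ringPos n e (fun _ => false) v s ↔
      n ∣ successCount n (ringPos n e (fun _ => true) v) r +
        successCount n (ringPos n e (fun _ => false) v) s := by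
  rw [ringPos_const_eq_add_nsmul e v true, ringPos_const_eq_add_nsmul e v false,
    ← ZMod.natCast_eq_zero_iff, Nat.cast_add, add_right_inj]
  simp only [if_true, Bool.false_eq_true, if_false, nsmul_one, smul_neg, eq_neg_iff_add_eq_zero]

end RingPos

/-- Stage 4 size-detection claim: robots `A` (always clockwise) and `B` (always
counterclockwise) start at the same node `v₀`; `a t`, `b t` are their successful-move
counters. If `t ≥ 1` is the first round with `a t + b t ≥ n`, then exactly one of the
following holds: (i) `a t + b t = n` and the robots are at the same node, or
(ii) `a t + b t = n + 1` and the robots crossed the same edge in opposite directions in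
round `t - 1`. -/
theorem meeting_counter_dichotomy (n : ℕ) (hn : 3 ≤ n)
    (v₀ : ZMod n) (e : ℕ → Option (ZMod n)) (t : ℕ) (ht : 1 ≤ t)
    (hprev :
      successCount n (ringPos n e (fun _ => true) v₀) (t - 1) +
        successCount n (ringPos n e (fun _ => false) v₀) (t - 1) < n)
    (hnow :
      n ≤ successCount n (ringPos n e (fun _ => true) v₀) t +
        successCount n (ringPos n e (fun _ => false) v₀) t) :
    Xor'
      (successCount n (ringPos n e (fun _ => true) v₀) t +
          successCount n (ringPos n e (fun _ => false) v₀) t = n ∧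
        ringPos n e (fun _ => true) v₀ t = ringPos n e (fun _ => false) v₀ t)
      (successCount n (ringPos n e (fun _ => true) v₀) t +
          successCount n (ringPos n e (fun _ => false) v₀) t = n + 1 ∧
        ringPos n e (fun _ => true) v₀ t = ringPos n e (fun _ => false) v₀ (t - 1) ∧
        ringPos n e (fun _ => false) v₀ t = ringPos n e (fun _ => true) v₀ (t - 1)) := by
  obtain ⟨s, rfl⟩ := Nat.exists_eq_add_of_le' ht
  rw [Nat.add_sub_cancel] at hprev ⊢
  have meet := ringPos_true_eq_ringPos_false_iff_dvd e v₀
  have hA := successCount_succ_le (ringPos n e (fun _ => true) v₀) s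
  have hB := successCount_succ_le (ringPos n e (fun _ => false) v₀) s
  rcases hnow.eq_or_lt with hsum | hsum
  · exact Or.inl ⟨⟨hsum.symm, (meet _ _).mpr (dvd_of_eq hsum)⟩, fun hcross => by omega⟩
  · have hcross_A : n = successCount n (ringPos n e (fun _ => true) v₀) (s + 1) +
        successCount n (ringPos n e (fun _ => false) v₀) s := by omega
    have hcross_B : n = successCount n (ringPos n e (fun _ => true) v₀) s +
        successCount n (ringPos n e (fun _ => false) v₀) (s + 1) := by omega
    exact Or.inr ⟨⟨by omega, (meet _ _).mpr (dvd_of_eq hcross_A),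
      ((meet _ _).mpr (dvd_of_eq hcross_B)).symm⟩, fun hnode => by omega⟩
end

section
/- Let n ≥ 3 and let M = {−1, 0, +1} denote the possible intended actions of a robot in a round (counterclockwise, stay, clockwise). There exists an adversary strategy Adv : ZMod n → ZMod n → M → M → Option (ZMod n), giving the removed edge as a function of the two robots' current positions and current intents, with the following property: for all intent sequences m₁, m₂ : ℕ → M and all start positions q₁ ≠ q₂ in ZMod n, the trajectories p₁, p₂ : ℕ → ZMod n defined by p_i 0 = q_i and, in round t with removed edge r = Adv (p₁ t) (p₂ t) (m₁ t) (m₂ t): a robot at p with intent +1 moves to p+1 iff r ≠ some p (else stays), with intent −1 moves to p−1 iff r ≠ some (p−1) (else stays), and with intent 0 stays — satisfy p₁ t ≠ p₂ t for all t, and for no t do p₁ (t+1) = p₂ t and p₂ (t+1) = p₁ t with p₁ t ≠ p₂ t. In other words, the adversary, removing at most one edge per round, can forever prevent the two robots from occupying the same node or from crossing the same edge in opposite directions, no matter how the robots choose their moves. -/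
/-- Intended action of a robot in a round: counterclockwise (−1), stay (0), or
clockwise (+1). -/
inductive Move : Type
  | ccw : Move
  | stay : Move
  | cw : Move

/-- One round of movement on the ring `ZMod n` when the adversary removes edge `r`
(edge `i` joins `i` and `i + 1`): with intent `cw` a robot at `p` moves to `p + 1` iff
`r ≠ some p`; with intent `ccw` it moves to `p - 1` iff `r ≠ some (p - 1)`; with intent
`stay` it stays. -/
def moveStep (n : ℕ) (r : Option (ZMod n)) (m : Move) (p : ZMod n) : ZMod n :=
  match m with
  | Move.cw => if r ≠ some p then p + 1 else p
  | Move.ccw => if r ≠ some (p - 1) then p - 1 else p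
  | Move.stay => p

/-- Joint trajectory of two robots with start nodes `q₁ q₂` and intent sequences
`m₁ m₂` against the positional adversary `Adv`, which removes an edge as a function of
the two current positions and the two current intents. -/
def twoTraj (n : ℕ) (Adv : ZMod n → ZMod n → Move → Move → Option (ZMod n))
    (m₁ m₂ : ℕ → Move) (q₁ q₂ : ZMod n) : ℕ → ZMod n × ZMod n
  | 0 => (q₁, q₂)
  | t + 1 =>
      let s := twoTraj n Adv m₁ m₂ q₁ q₂ t
      let r := Adv s.1 s.2 (m₁ t) (m₂ t)
      (moveStep n r (m₁ t) s.1, moveStep n r (m₂ t) s.2)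

/-! If the two intents agree, the adversary removes nothing: both robots are translated by the same
amount, which keeps them apart, and they could only exchange places if `2 = 0` in `ZMod n`,
which happens for no `n ≥ 3`.
If the intents differ, the adversary keeps the first robot in place. When that uses up the removed
edge, the second robot is idle or heads the opposite way, so it could enter the first robot's node
only through that very edge; when the first robot is idle, the edge is spent on blocking the second.
-/

/-- The edge that a robot at `p` with intent `m` is about to traverse, `none` if it intends to stay.
It has the type of the removed edge, so that the adversary can play it as it is. -/
def Move.edge {n : ℕ} (m : Move) (p : ZMod n) : Option (ZMod n) :=
  match m with
  | .cw => some p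
  | .ccw => some (p - 1)
  | .stay => none

/-- The adversary strategy that keeps the robots apart: it removes nothing when the intents agree
and otherwise keeps the first robot in place, or the second if the first one intends to stay. -/
def blockingAdversary (n : ℕ) (p q : ZMod n) (a b : Move) : Option (ZMod n) :=
  match a, b with
  | .cw, .cw => none
  | .ccw, .ccw => none
  | .stay, b => b.edge q
  | a, _ => a.edge p

section Round

variable {n : ℕ} {p q : ZMod n} {a b : Move}

theorem moveStep_edge_self (m : Move) (p : ZMod n) : moveStep n (m.edge p) m p = p := by
  cases m <;> simp [moveStep, Move.edge]

theorem moveStep_edge_ne (ha : a ≠ .stay) (hab : a ≠ b) (hpq : p ≠ q) :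
    moveStep n (a.edge p) b q ≠ p := by
  cases a <;> cases b <;> grind [moveStep, Move.edge]

theorem moveStep_none_injective (m : Move) : Function.Injective (moveStep n none m) := by
  cases m <;> intro p q h <;> simpa [moveStep] using h

theorem moveStep_none_not_swap (hn : n ≠ 2) (m : Move) (hpq : p ≠ q) :
    ¬ (moveStep n none m p = q ∧ moveStep n none m q = p) := by
  have : Nontrivial (ZMod n) := nontrivial_of_ne p q hpq
  have two_ne_zero : (2 : ZMod n) ≠ 0 :=
    Ring.two_ne_zero ((ZMod.ringChar_zmod_n n).trans_ne hn)
  rintro ⟨rfl, hback⟩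
  cases m with
  | stay => exact hpq rfl
  | cw =>
    have round_trip : p + 1 + 1 = p := hback
    exact two_ne_zero (by linear_combination round_trip)
  | ccw =>
    have round_trip : p - 1 - 1 = p := hback
    exact two_ne_zero (by linear_combination -round_trip)

theorem blockingAdversary_self (p q : ZMod n) (m : Move) :
    blockingAdversary n p q m m = none := by
  cases m <;> rfl

theorem blockingAdversary_stay (p q : ZMod n) (b : Move) :
    blockingAdversary n p q .stay b = b.edge q := by
  cases b <;> rfl

theorem blockingAdversary_of_ne (ha : a ≠ .stay) (hab : a ≠ b) (p q : ZMod n) :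
    blockingAdversary n p q a b = a.edge p := by
  cases a <;> cases b <;> first | rfl | contradiction

theorem moveStep_blockingAdversary_fst (hab : a ≠ b) (p q : ZMod n) :
    moveStep n (blockingAdversary n p q a b) a p = p := by
  by_cases ha : a = .stay
  · subst ha
    rfl
  · rw [blockingAdversary_of_ne ha hab, moveStep_edge_self]

theorem moveStep_blockingAdversary_snd_ne (hab : a ≠ b) (hpq : p ≠ q) :
    moveStep n (blockingAdversary n p q a b) b q ≠ p := by
  by_cases ha : a = .stay
  · subst ha
    rw [blockingAdversary_stay, moveStep_edge_self]
    exact hpq.symm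
  · rw [blockingAdversary_of_ne ha hab]
    exact moveStep_edge_ne ha hab hpq

theorem moveStep_blockingAdversary_ne (a b : Move) (hpq : p ≠ q) :
    moveStep n (blockingAdversary n p q a b) a p ≠
      moveStep n (blockingAdversary n p q a b) b q := by
  by_cases hab : a = b
  · subst hab
    rw [blockingAdversary_self]
    exact (moveStep_none_injective a).ne hpq
  · rw [moveStep_blockingAdversary_fst hab]
    exact (moveStep_blockingAdversary_snd_ne hab hpq).symm

theorem moveStep_blockingAdversary_not_swap (hn : n ≠ 2) (a b : Move) (hpq : p ≠ q) :
    ¬ (moveStep n (blockingAdversary n p q a b) a p = q ∧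
      moveStep n (blockingAdversary n p q a b) b q = p) := by
  by_cases hab : a = b
  · subst hab
    rw [blockingAdversary_self]
    exact moveStep_none_not_swap hn a hpq
  · exact fun h => moveStep_blockingAdversary_snd_ne hab hpq h.2

end Round

theorem twoTraj_blockingAdversary_ne {n : ℕ} (m₁ m₂ : ℕ → Move) {q₁ q₂ : ZMod n} (hq : q₁ ≠ q₂)
    (t : ℕ) :
    (twoTraj n (blockingAdversary n) m₁ m₂ q₁ q₂ t).1 ≠
      (twoTraj n (blockingAdversary n) m₁ m₂ q₁ q₂ t).2 := by
  induction t with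
  | zero => exact hq
  | succ t ih => exact moveStep_blockingAdversary_ne (m₁ t) (m₂ t) ih

/-- Observation 1: on a ring of size `n ≥ 3` there is an adversary strategy, removing at
most one edge per round as a function of the robots' positions and intents, that forever
prevents two robots starting at distinct nodes from occupying the same node or crossing
the same edge in opposite directions, whatever their intent sequences are. -/
theorem adversary_prevents_two_robots_meeting (n : ℕ) (hn : 3 ≤ n) :
    ∃ Adv : ZMod n → ZMod n → Move → Move → Option (ZMod n),
      ∀ (m₁ m₂ : ℕ → Move) (q₁ q₂ : ZMod n), q₁ ≠ q₂ →
        (∀ t, (twoTraj n Adv m₁ m₂ q₁ q₂ t).1 ≠ (twoTraj n Adv m₁ m₂ q₁ q₂ t).2) ∧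
        (∀ t, ¬ ((twoTraj n Adv m₁ m₂ q₁ q₂ (t + 1)).1 = (twoTraj n Adv m₁ m₂ q₁ q₂ t).2 ∧
                 (twoTraj n Adv m₁ m₂ q₁ q₂ (t + 1)).2 = (twoTraj n Adv m₁ m₂ q₁ q₂ t).1 ∧
                 (twoTraj n Adv m₁ m₂ q₁ q₂ t).1 ≠ (twoTraj n Adv m₁ m₂ q₁ q₂ t).2)) := by
  refine ⟨blockingAdversary n, fun m₁ m₂ q₁ q₂ hq =>
    ⟨twoTraj_blockingAdversary_ne m₁ m₂ hq, fun t ⟨h₁, h₂, hne⟩ => ?_⟩⟩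
  have hn2 : n ≠ 2 := by omega
  exact moveStep_blockingAdversary_not_swap hn2 (m₁ t) (m₂ t) hne ⟨h₁, h₂⟩
end
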